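/- There exists a nonzero polynomial f in two variables u, w with rational coefficients such that: for all rational numbers u, w with u > 1, w > 1 and f(u,w) ≠ 0, the set of rational numbers v with max(u²/w, w/u²) < v < u²w for which there exists a rational number t with t² = (v²w + w + vw² + v)²u² − 4v²w²(u²+1)² is infinite. (Equivalently, for almost all u, w there are infinitely many hyperbolic triangles with rational side lengths, two of which are a = 2 log u and b = log w, having a rational median intersecting side a.) -/

import Mathlib

/-!
Put `U = u + 1 / u` and `K = w + 1 / w`. With `x = v` and `t = v w (u² + 1) (y - 1 / y)` the median
condition becomes the curve `x + 1 / x + K = U (y + 1 / y)`. The substitution `ξ = U x y`,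
`η = x (ξ - U²)`, `Y = η + K ξ / 2` turns it into the cubic
`Y² = ξ³ + (K² / 4 - 1 - U²) ξ² + U² ξ`, and the degenerate triangle `v = u² w` (where `y = u w`)
provides a rational point `Q` on it with `ξ = (u² + 1) u² w²`.

The point `Q` has infinite order. Let `p` divide the numerator of `u`. Since `U` and `K` do not
change when `u` or `w` is inverted, one may assume that `u` is not `p`-integral and `|w| ≥ 1`; then
`Q` reduces to the point at infinity in some `p`-integral model (`infinite_of_padic`). In the
kernel of reduction, multiplication by `p` strictly decreases the absolute value of the parameter
`z = X / Y` without making it zero (`formal_mul_p`), so there are infinitely many rational points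
(`formal_small`, `infinite_points`).

Infinitely many rational points on a nonsingular cubic include points arbitrarily close to infinity
(`unbounded`). Adding these to `Q` gives rational points close to `Q` and slightly to its left
(`approx`). On the biquadratic curve these correspond to values of `v` slightly smaller than `u² w`
(`exists_close`), where the remaining triangle inequality holds automatically. The polynomial `f`
excludes singular cubics and the case where `Q` lies over `ξ = U²`.
-/

/-! ### Points in the kernel of reduction -/

section
variable {p : ℕ} [hp : Fact p.Prime]

/-- The point `(z, w)` lies in the kernel of reduction modulo `p` of the curve
`Y² = X³ + a X² + b X`, in the coordinates `z = X / Y`, `w = 1 / Y` (for `p`-integral `a`, `b`).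
The point at infinity is `(0, 0)`; the affine point, when `w ≠ 0`, is `(z / w, 1 / w)`. -/
def Formal (p : ℕ) (a b z w : ℚ) : Prop :=
  w = z ^ 3 + a * z ^ 2 * w + b * z * w ^ 2 ∧ padicNorm p z < 1 ∧ padicNorm p w < 1

lemma N_add_le {x y c : ℚ} (hx : padicNorm p x ≤ c) (hy : padicNorm p y ≤ c) :
    padicNorm p (x + y) ≤ c :=
  padicNorm.nonarchimedean.trans (max_le hx hy)

lemma N_sub_le {x y c : ℚ} (hx : padicNorm p x ≤ c) (hy : padicNorm p y ≤ c) :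
    padicNorm p (x - y) ≤ c :=
  padicNorm.sub.trans (max_le hx hy)

lemma N_mul_le {x y c d : ℚ} (hx : padicNorm p x ≤ c) (hy : padicNorm p y ≤ d) :
    padicNorm p (x * y) ≤ c * d := by
  rw [padicNorm.mul]
  exact mul_le_mul hx hy (padicNorm.nonneg _) ((padicNorm.nonneg _).trans hx)

lemma N_pow (x : ℚ) (n : ℕ) : padicNorm p (x ^ n) = padicNorm p x ^ n := by
  induction n with
  | zero => simp
  | succ k ih => rw [pow_succ, padicNorm.mul, ih, pow_succ]

lemma N_one_add {x : ℚ} (hx : padicNorm p x < 1) : padicNorm p (1 + x) = 1 := by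
  rw [padicNorm.add_eq_max_of_ne (by simpa using hx.ne'), padicNorm.one, max_eq_left hx.le]

/-- A p-adic absolute value below `1` is at most `1 / p`. -/
lemma N_le_inv {x : ℚ} (hx : padicNorm p x < 1) : padicNorm p x ≤ (p : ℚ)⁻¹ := by
  have h1 : (1 : ℚ) < p := by exact_mod_cast hp.out.one_lt
  by_cases h : x = 0
  · subst h; simp
  · rw [padicNorm.eq_zpow_of_nonzero h] at hx ⊢
    have : -padicValRat p x < 0 := by
      by_contra hc
      exact absurd hx (not_lt.mpr (one_le_zpow₀ h1.le (not_lt.mp hc)))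
    rw [← zpow_neg_one]
    exact zpow_le_zpow_right₀ h1.le (by omega)

/-- In the kernel of reduction `w = z³ · (unit)`, so `z` is a local parameter. -/
lemma formal_w {a b z w : ℚ} (ha : padicNorm p a ≤ 1) (hb : padicNorm p b ≤ 1)
    (h : Formal p a b z w) : padicNorm p w = padicNorm p z ^ 3 := by
  obtain ⟨he, hz, hw⟩ := h
  have hz0 := padicNorm.nonneg (p := p) z
  have hw0 := padicNorm.nonneg (p := p) w
  have hm : padicNorm p (-(a * z ^ 2) - b * z * w) < 1 := by
    refine lt_of_le_of_lt (N_sub_le (c := padicNorm p z) ?_ ?_) hz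
    · rw [padicNorm.neg]
      refine (N_mul_le ha (N_pow z 2).le).trans ?_
      nlinarith
    · refine (N_mul_le (N_mul_le hb le_rfl) hw.le).trans ?_
      nlinarith
  have : w * (1 + (-(a * z ^ 2) - b * z * w)) = z ^ 3 := by linear_combination he
  rw [← N_pow, ← this, padicNorm.mul, N_one_add hm, mul_one]

/-- Addition in the kernel of reduction agrees with addition of parameters up to third order. The
point `(z, w)` is the negative of the third intersection of the curve with the line through the two
given points (their sum in the group law), the tangent being used when they coincide. -/
lemma formal_add {a b z₁ w₁ z₂ w₂ M : ℚ} (ha : padicNorm p a ≤ 1) (hb : padicNorm p b ≤ 1)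
    (h₁ : Formal p a b z₁ w₁) (h₂ : Formal p a b z₂ w₂)
    (hM₁ : padicNorm p z₁ ≤ M) (hM₂ : padicNorm p z₂ ≤ M) (hM : M < 1) :
    ∃ z w, Formal p a b z w ∧ padicNorm p (z - z₁ - z₂) ≤ M ^ 3 := by
  have hM0 : 0 ≤ M := (padicNorm.nonneg _).trans hM₁
  have hw₁ : padicNorm p w₁ ≤ M ^ 3 := by
    rw [formal_w ha hb h₁]; exact pow_le_pow_left₀ (padicNorm.nonneg _) hM₁ 3
  have hw₂ : padicNorm p w₂ ≤ M ^ 3 := by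
    rw [formal_w ha hb h₂]; exact pow_le_pow_left₀ (padicNorm.nonneg _) hM₂ 3
  obtain ⟨e₁, -, -⟩ := h₁
  obtain ⟨e₂, -, -⟩ := h₂
  have M32 : M ^ 3 ≤ M ^ 2 := pow_le_pow_of_le_one hM0 hM.le (by norm_num)
  have M31 : M ^ 3 ≤ M := by simpa using pow_le_pow_of_le_one hM0 hM.le (show 1 ≤ 3 by norm_num)
  have M21 : M ^ 2 ≤ M := by simpa using pow_le_pow_of_le_one hM0 hM.le (show 1 ≤ 2 by norm_num)
  -- `A * (w₂ - w₁) = B * (z₂ - z₁)` along the curve, with `A` a unit: the slope is `B / A`,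
  -- also in the tangent case
  set A : ℚ := 1 + (-(a * z₂ ^ 2) - b * (z₁ * (w₁ + w₂))) with hA
  set B : ℚ := (z₁ ^ 2 + z₁ * z₂ + z₂ ^ 2) + (a * (w₁ * (z₁ + z₂)) + b * w₂ ^ 2) with hB
  have sq : ∀ {x : ℚ}, padicNorm p x ≤ M → padicNorm p (x ^ 2) ≤ M ^ 2 := fun h => by
    rw [N_pow]; exact pow_le_pow_left₀ (padicNorm.nonneg _) h 2
  have hAn : padicNorm p A = 1 := by
    refine N_one_add (lt_of_le_of_lt (N_sub_le (c := M) ?_ ?_) hM)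
    · rw [padicNorm.neg]
      refine (N_mul_le ha (sq hM₂)).trans ?_
      linarith
    · refine (N_mul_le hb (N_mul_le hM₁ (N_add_le hw₁ hw₂))).trans ?_
      nlinarith
  have hBn : padicNorm p B ≤ M ^ 2 := by
    refine N_add_le (N_add_le (N_add_le (sq hM₁) ?_) (sq hM₂)) (N_add_le ?_ ?_)
    · exact (N_mul_le hM₁ hM₂).trans (by nlinarith)
    · refine (N_mul_le ha (N_mul_le hw₁ (N_add_le hM₁ hM₂))).trans ?_
      nlinarith
    · refine (N_mul_le hb (sq (hw₂.trans M31))).trans ?_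
      linarith
  have hA0 : A ≠ 0 := by
    intro h; rw [h] at hAn; simp at hAn
  obtain ⟨l, hl⟩ : ∃ l, l = B / A := ⟨_, rfl⟩
  have hlA : l * A = B := by rw [hl]; field_simp
  have hln : padicNorm p l ≤ M ^ 2 := by
    rw [hl, padicNorm.div, hAn, div_one]; exact hBn
  obtain ⟨m, hm⟩ : ∃ m, m = w₁ - l * z₁ := ⟨_, rfl⟩
  have hmn : padicNorm p m ≤ M ^ 3 := by
    rw [hm]
    refine N_sub_le hw₁ ((N_mul_le hln hM₁).trans (by nlinarith))
  have hw1 : w₁ = l * z₁ + m := by rw [hm]; ring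
  have hw2 : w₂ = l * z₂ + m := by
    have : A * (w₂ - w₁) = B * (z₂ - z₁) := by rw [hA, hB]; linear_combination e₂ - e₁
    have : A * (w₂ - (l * z₂ + m)) = 0 := by
      rw [hm]; linear_combination this - (z₂ - z₁) * hlA
    rcases mul_eq_zero.mp this with h | h
    · exact absurd h hA0
    · linarith
  -- the line meets the curve where `C z³ + D z² + E z - m = 0`
  obtain ⟨C, hC⟩ : ∃ C, C = 1 + (a * l + b * l ^ 2) := ⟨_, rfl⟩
  obtain ⟨D, hD⟩ : ∃ D, D = (a + b * (l + l)) * m := ⟨_, rfl⟩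
  have hlM : padicNorm p l ≤ M := hln.trans M21
  have hCn : padicNorm p C = 1 := by
    rw [hC]
    refine N_one_add (lt_of_le_of_lt (N_add_le (c := M) ?_ ?_) hM)
    · exact (N_mul_le ha hlM).trans (by linarith)
    · exact (N_mul_le hb (sq hlM)).trans (by linarith)
  have hDn : padicNorm p D ≤ M ^ 3 := by
    rw [hD]
    refine (N_mul_le (c := 1) (N_add_le ha ?_) hmn).trans (by linarith)
    exact (N_mul_le hb (N_add_le hlM hlM)).trans (by linarith)
  have hC0 : C ≠ 0 := by
    intro h; rw [h] at hCn; simp at hCn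
  obtain ⟨q, hq⟩ : ∃ q, q = D / C := ⟨_, rfl⟩
  have hqC : q * C = D := by rw [hq]; field_simp
  have hqn : padicNorm p q ≤ M ^ 3 := by
    rw [hq, padicNorm.div, hCn, div_one]; exact hDn
  have hz : padicNorm p (q + z₁ + z₂) ≤ M := N_add_le (N_add_le (hqn.trans M31) hM₁) hM₂
  refine ⟨q + z₁ + z₂, l * (q + z₁ + z₂) - m, ⟨?_, hz.trans_lt hM, ?_⟩, ?_⟩
  · have hdd : C * (z₁ ^ 2 + z₁ * z₂ + z₂ ^ 2) + D * (z₁ + z₂) + (b * m ^ 2 - l) = 0 := by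
      rw [hA, hB, hw1, hw2] at hlA
      rw [hC, hD]
      linear_combination -hlA
    have hr : C * z₁ ^ 3 + D * z₁ ^ 2 + (b * m ^ 2 - l) * z₁ - m = 0 := by
      rw [hw1] at e₁
      rw [hC, hD]
      linear_combination -e₁
    have : C * (-(q + z₁ + z₂)) ^ 3 + D * (-(q + z₁ + z₂)) ^ 2
        + (b * m ^ 2 - l) * (-(q + z₁ + z₂)) - m = 0 := by
      have hE : b * m ^ 2 - l = -(C * (z₁ ^ 2 + z₁ * z₂ + z₂ ^ 2) + D * (z₁ + z₂)) := by
        linear_combination hdd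
      rw [hE, ← hqC] at hr ⊢
      linear_combination hr
    rw [hC, hD] at this
    linear_combination this
  · refine lt_of_le_of_lt (N_sub_le (c := M) ?_ (hmn.trans M31)) hM
    exact (N_mul_le hlM hz).trans (by nlinarith)
  · have : q + z₁ + z₂ - z₁ - z₂ = q := by ring
    rwa [this]

/-- The `n`-th multiple of a point has parameter `n z + O(z³)`. -/
lemma formal_mul {a b z w : ℚ} (ha : padicNorm p a ≤ 1) (hb : padicNorm p b ≤ 1)
    (h : Formal p a b z w) (n : ℕ) :
    ∃ z' w', Formal p a b z' w' ∧ padicNorm p (z' - n * z) ≤ padicNorm p z ^ 3 := by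
  have h0 := padicNorm.nonneg (p := p) z
  have h31 : padicNorm p z ^ 3 ≤ padicNorm p z := by
    simpa using pow_le_pow_of_le_one h0 h.2.1.le (show 1 ≤ 3 by norm_num)
  induction n with
  | zero => exact ⟨0, 0, ⟨by simp, by simp, by simp⟩, by simpa using by positivity⟩
  | succ k ih =>
    obtain ⟨z', w', h', hk⟩ := ih
    have hz' : padicNorm p z' ≤ padicNorm p z := by
      have : z' = (z' - k * z) + k * z := by ring
      rw [this]
      refine N_add_le (hk.trans h31) ?_
      have := N_mul_le (p := p) (padicNorm.of_nat k) (le_refl (padicNorm p z))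
      simpa using this
    obtain ⟨z'', w'', h'', hk'⟩ := formal_add ha hb h' h hz' le_rfl h.2.1
    refine ⟨z'', w'', h'', ?_⟩
    have : z'' - ((k + 1 : ℕ) : ℚ) * z = (z'' - z' - z) + (z' - k * z) := by push_cast; ring
    rw [this]
    exact N_add_le hk' hk

/-- Multiplication by `p` moves a point strictly closer to the origin without reaching it: the
parameter `p z + O(z³)` has absolute value exactly `|z| / p`, since `|z|² ≤ p⁻² < p⁻¹`; this
includes `p = 2`. -/
lemma formal_mul_p {a b z w : ℚ} (ha : padicNorm p a ≤ 1) (hb : padicNorm p b ≤ 1)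
    (h : Formal p a b z w) (hz : z ≠ 0) :
    ∃ z' w', Formal p a b z' w' ∧ z' ≠ 0 ∧ padicNorm p z' < padicNorm p z := by
  obtain ⟨z', w', h', hk⟩ := formal_mul ha hb h p
  have h1 : (1 : ℚ) < p := by exact_mod_cast hp.out.one_lt
  have hz0 : 0 < padicNorm p z := (padicNorm.nonneg z).lt_of_ne' (padicNorm.nonzero hz)
  have hle := N_le_inv h.2.1
  have hi : (p : ℚ)⁻¹ < 1 := inv_lt_one_of_one_lt₀ h1
  have hip : 0 < (p : ℚ)⁻¹ := by positivity
  have hpz : padicNorm p (p * z) = (p : ℚ)⁻¹ * padicNorm p z := by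
    rw [padicNorm.mul, padicNorm.padicNorm_p hp.out.one_lt]
  have hlt : padicNorm p (z' - p * z) < padicNorm p (p * z) := by
    rw [hpz]
    refine hk.trans_lt ?_
    have : padicNorm p z ^ 2 < (p : ℚ)⁻¹ := by nlinarith
    nlinarith
  have hz' : padicNorm p z' = (p : ℚ)⁻¹ * padicNorm p z := by
    rw [← hpz]
    have : z' = (z' - p * z) + p * z := by ring
    rw [this, padicNorm.add_eq_max_of_ne hlt.ne, max_eq_right hlt.le]
  refine ⟨z', w', h', ?_, ?_⟩
  · rintro rfl
    simp at hz'
    rcases hz' with h | h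
    · exact hp.out.ne_zero h
    · exact hz (padicNorm.zero_of_padicNorm_eq_zero h)
  · rw [hz']; nlinarith

/-- A nontrivial point in the kernel of reduction has infinitely many multiples, so the curve has
infinitely many rational points. -/
lemma formal_small {a b z w : ℚ} (ha : padicNorm p a ≤ 1) (hb : padicNorm p b ≤ 1)
    (h : Formal p a b z w) (hz : z ≠ 0) :
    {x : ℚ | ∃ y, y ^ 2 = x ^ 3 + a * x ^ 2 + b * x}.Infinite := by
  intro hfin
  -- `|x| = |z|⁻²`, so among finitely many `x`-coordinates some point has `|z|` smallest;
  -- multiplying that point by `p` gives a contradiction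
  have hT : {q : ℚ | ∃ z w, Formal p a b z w ∧ z ≠ 0 ∧ q = padicNorm p (z / w)}.Finite := by
    refine (hfin.image (padicNorm p)).subset ?_
    rintro q ⟨z, w, ⟨he, -, -⟩, hz, rfl⟩
    have hw : w ≠ 0 := by
      rintro rfl
      simp at he
      exact hz (pow_eq_zero_iff (by norm_num) |>.mp he.symm)
    refine ⟨z / w, ⟨1 / w, ?_⟩, rfl⟩
    field_simp
    linear_combination he
  obtain ⟨q, ⟨z₀, w₀, h₀, hz₀, hq⟩, hmax⟩ := hT.exists_maximal ⟨_, z, w, h, hz, rfl⟩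
  obtain ⟨z', w', h', hz', hlt⟩ := formal_mul_p ha hb h₀ hz₀
  have hp0 : 0 < padicNorm p z' := (padicNorm.nonneg z').lt_of_ne' (padicNorm.nonzero hz')
  have hp1 : 0 < padicNorm p z₀ := (padicNorm.nonneg z₀).lt_of_ne' (padicNorm.nonzero hz₀)
  have e : ∀ {z w : ℚ}, Formal p a b z w → 0 < padicNorm p z →
      padicNorm p (z / w) = (padicNorm p z ^ 2)⁻¹ := by
    intro z w h hz
    rw [padicNorm.div, formal_w ha hb h]
    field_simp
  have hgt : q < padicNorm p (z' / w') := by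
    rw [hq, e h₀ hp1, e h' hp0]
    exact inv_strictAnti₀ (by positivity) (pow_lt_pow_left₀ hlt hp0.le (by norm_num))
  exact absurd (hmax ⟨z', w', h', hz', rfl⟩ hgt.le) (not_le.mpr hgt)
end

/-! ### Real approximation by rational points -/

open Filter Topology

/-- The third intersection of a chord of slope `l` with the cubic, reflected in the `x`-axis, lies on
the curve. -/
lemma chord {F : Type*} [Field F] {a b x₁ y₁ x₂ y₂ l : F}
    (h₁ : y₁ ^ 2 = x₁ ^ 3 + a * x₁ ^ 2 + b * x₁)
    (h₂ : y₂ ^ 2 = x₂ ^ 3 + a * x₂ ^ 2 + b * x₂) (hne : x₂ ≠ x₁) (hl : l = (y₂ - y₁) / (x₂ - x₁)) :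
    (-(y₁ + l * ((l ^ 2 - a - x₁ - x₂) - x₁))) ^ 2 = (l ^ 2 - a - x₁ - x₂) ^ 3
      + a * (l ^ 2 - a - x₁ - x₂) ^ 2 + b * (l ^ 2 - a - x₁ - x₂) := by
  have hd : x₂ - x₁ ≠ 0 := sub_ne_zero.mpr hne
  have hy : y₂ = y₁ + l * (x₂ - x₁) := by rw [hl]; field_simp; ring
  rw [hy] at h₂
  -- the divided difference of the cubic minus the squared line vanishes
  have hdd : 2 * y₁ * l + l ^ 2 * (x₂ - x₁)
      - (x₁ ^ 2 + x₁ * x₂ + x₂ ^ 2 + a * (x₁ + x₂) + b) = 0 := by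
    apply (mul_eq_zero.mp (_ : (x₂ - x₁) * _ = 0)).resolve_left hd
    linear_combination h₂ - h₁
  linear_combination h₁ + ((l ^ 2 - a - x₁ - x₂) - x₁) * hdd

/-- If `(G, Y)` is a point of the upper branch close enough to infinity, its sum with `(x₁, y₁)` has
coordinates close to `(x₁, y₁)` and abscissa slightly smaller than `x₁`. In the local parameter
`τ = 1 / √G` the abscissa of the sum is `x₁ - 2 y₁ τ + O(τ²)`. -/
lemma near_infinity {a b x₁ y₁ ε : ℝ} (hy : 0 < y₁) (hε : 0 < ε) :
    ∃ N : ℝ, ∀ G Y l : ℝ, N < G → 0 < Y → Y ^ 2 = G ^ 3 + a * G ^ 2 + b * G →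
      y₁ ^ 2 = x₁ ^ 3 + a * x₁ ^ 2 + b * x₁ →
      l = (Y - y₁) / (G - x₁) →
      x₁ - ε < l ^ 2 - a - x₁ - G ∧ l ^ 2 - a - x₁ - G < x₁ ∧
        |-(y₁ + l * ((l ^ 2 - a - x₁ - G) - x₁)) - y₁| < ε := by
  -- with `ρ = τ³ Y`, the chord has slope `J / τ` and the sum has abscissa `x₁ - τ H`
  let ρ : ℝ → ℝ := fun τ => √(1 + a * τ ^ 2 + b * τ ^ 4)
  let H : ℝ → ℝ := fun τ => (2 * ρ τ * y₁ - (3 * x₁ ^ 2 + 2 * a * x₁ + b) * τ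
    + (2 * x₁ ^ 3 + a * x₁ ^ 2 - y₁ ^ 2) * τ ^ 3) / (1 - x₁ * τ ^ 2) ^ 2
  let J : ℝ → ℝ := fun τ => (ρ τ - y₁ * τ ^ 3) / (1 - x₁ * τ ^ 2)
  have hρ : ContinuousAt ρ 0 := by
    apply Continuous.continuousAt; fun_prop
  have hH : ContinuousAt H 0 := by
    apply ContinuousAt.div (by fun_prop) (by fun_prop) (by norm_num)
  have hJ : ContinuousAt J 0 := by
    apply ContinuousAt.div (by fun_prop) (by fun_prop) (by norm_num)
  have hH0 : H 0 = 2 * y₁ := by simp [H, ρ]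
  have hJ0 : J 0 = 1 := by simp [J, ρ]
  have e1 : ∀ᶠ τ in 𝓝 (0 : ℝ), τ * H τ < ε := by
    have : ContinuousAt (fun τ => τ * H τ) 0 := by fun_prop
    exact this.eventually_lt continuousAt_const (by simpa using hε)
  have e2 : ∀ᶠ τ in 𝓝 (0 : ℝ), 0 < H τ :=
    continuousAt_const.eventually_lt hH (by rw [hH0]; positivity)
  have e3 : ∀ᶠ τ in 𝓝 (0 : ℝ), |-2 * y₁ + J τ * H τ| < ε := by
    have : ContinuousAt (fun τ => |-2 * y₁ + J τ * H τ|) 0 := by fun_prop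
    exact this.eventually_lt continuousAt_const (by simpa [hH0, hJ0] using hε)
  have e4 : ∀ᶠ τ in 𝓝 (0 : ℝ), 0 < 1 - x₁ * τ ^ 2 := by
    have : ContinuousAt (fun τ : ℝ => 1 - x₁ * τ ^ 2) 0 := by fun_prop
    exact continuousAt_const.eventually_lt this (by simp)
  have e5 : ∀ᶠ τ in 𝓝 (0 : ℝ), 0 < 1 + a * τ ^ 2 + b * τ ^ 4 := by
    have : ContinuousAt (fun τ : ℝ => 1 + a * τ ^ 2 + b * τ ^ 4) 0 := by fun_prop
    exact continuousAt_const.eventually_lt this (by simp)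
  obtain ⟨δ, hδ, hall⟩ := Metric.eventually_nhds_iff.mp
    (e1.and (e2.and (e3.and (e4.and e5))))
  refine ⟨(1 / δ) ^ 2, fun G Y l hG hY hYG h₁ hl => ?_⟩
  have hG0 : 0 < G := lt_of_le_of_lt (by positivity) hG
  obtain ⟨τ, hτ⟩ : ∃ τ, τ = 1 / √G := ⟨_, rfl⟩
  have hs : 0 < √G := Real.sqrt_pos.mpr hG0
  have hτ0 : 0 < τ := by rw [hτ]; positivity
  have hGτ : G = 1 / τ ^ 2 := by rw [hτ]; field_simp; rw [Real.sq_sqrt hG0.le]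
  have hτδ : τ < δ := by
    have : 1 / δ < √G := Real.lt_sqrt_of_sq_lt hG
    rw [hτ, div_lt_iff₀ hs]
    rwa [div_lt_iff₀ hδ, mul_comm] at this
  obtain ⟨f1, f2, f3, f4, f5⟩ := hall (y := τ) (by simpa [abs_of_pos hτ0] using hτδ)
  have hρ2 : ρ τ ^ 2 = 1 + a * τ ^ 2 + b * τ ^ 4 := Real.sq_sqrt f5.le
  have hYτ : Y = ρ τ / τ ^ 3 := by
    have h0 : 0 ≤ ρ τ := Real.sqrt_nonneg _
    refine (pow_left_inj₀ hY.le (by positivity) two_ne_zero).mp ?_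
    rw [hYG, div_pow, hρ2, hGτ]
    field_simp
  have hlJ : l = J τ / τ := by
    have hGx : G - x₁ = (1 - x₁ * τ ^ 2) / τ ^ 2 := by rw [hGτ]; field_simp
    rw [hl, hGx, hYτ]
    simp only [J]
    field_simp
  have hX : l ^ 2 - a - x₁ - G = x₁ - τ * H τ := by
    rw [hlJ, hGτ]
    simp only [J, H]
    obtain ⟨d, hd⟩ : ∃ d, d = 1 - x₁ * τ ^ 2 := ⟨_, rfl⟩
    rw [← hd] at f4 ⊢
    field_simp
    rw [hd]
    linear_combination hρ2
  rw [hX]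
  have hYY : -(y₁ + l * (x₁ - τ * H τ - x₁)) - y₁ = -2 * y₁ + J τ * H τ := by
    rw [hlJ]; field_simp; ring
  rw [hYY]
  refine ⟨by linarith, by nlinarith, f3⟩

/-- Near an accumulation point of abscissas on a nonsingular cubic, chords become arbitrarily steep.
The right side of the final inequality is a lower bound for the abscissa of the sum of points over `x`
and `x'` whose ordinates have opposite signs; the sum of the two values of the cubic is at least of
the order of `|x - x'|`, and this is divided by `(x - x')²`. -/
lemma accum {a b X : ℝ}
    (hs : X ^ 3 + a * X ^ 2 + b * X = 0 → 3 * X ^ 2 + 2 * a * X + b ≠ 0) (N : ℝ) :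
    ∃ δ > 0, ∀ x x' : ℝ, |x - X| < δ → |x' - X| < δ → x ≠ x' →
      0 ≤ x ^ 3 + a * x ^ 2 + b * x → 0 ≤ x' ^ 3 + a * x' ^ 2 + b * x' →
      N < ((x ^ 3 + a * x ^ 2 + b * x) + (x' ^ 3 + a * x' ^ 2 + b * x')) / (x - x') ^ 2
        - a - x - x' := by
  obtain ⟨κ, hκ, δ, hδ, H⟩ : ∃ κ > 0, ∃ δ > 0, ∀ x x' : ℝ, |x - X| < δ → |x' - X| < δ →
      0 ≤ x ^ 3 + a * x ^ 2 + b * x → 0 ≤ x' ^ 3 + a * x' ^ 2 + b * x' →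
      κ * |x - x'| ≤ (x ^ 3 + a * x ^ 2 + b * x) + (x' ^ 3 + a * x' ^ 2 + b * x') := by
    have hc : ContinuousAt (fun x : ℝ => x ^ 3 + a * x ^ 2 + b * x) X := by fun_prop
    rcases lt_trichotomy (X ^ 3 + a * X ^ 2 + b * X) 0 with h | h | h
    · obtain ⟨δ, hδ, hall⟩ := Metric.eventually_nhds_iff.mp
        (hc.eventually_lt (continuousAt_const (y := (0 : ℝ))) h)
      exact ⟨1, one_pos, δ, hδ, fun x x' hx _ h0 _ => absurd (hall hx) (not_lt.mpr h0)⟩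
    · -- near a simple root the cubic is expanding
      have hq : ContinuousAt (fun P : ℝ × ℝ => |P.1 ^ 2 + P.1 * P.2 + P.2 ^ 2
          + a * (P.1 + P.2) + b|) (X, X) := by fun_prop
      have hd : 0 < |3 * X ^ 2 + 2 * a * X + b| := abs_pos.mpr (hs h)
      obtain ⟨δ, hδ, hall⟩ := Metric.eventually_nhds_iff.mp
        ((continuousAt_const (y := |3 * X ^ 2 + 2 * a * X + b| / 2)).eventually_lt hq (by
          have : X ^ 2 + X * X + X ^ 2 + a * (X + X) + b = 3 * X ^ 2 + 2 * a * X + b := by ring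
          simp only [this]; linarith))
      refine ⟨_, half_pos hd, δ, hδ, fun x x' hx hx' h0 h0' => ?_⟩
      have := hall (y := (x, x')) (by rw [Prod.dist_eq]; exact max_lt hx hx')
      calc _ ≤ |x ^ 2 + x * x' + x' ^ 2 + a * (x + x') + b| * |x - x'| :=
            mul_le_mul_of_nonneg_right this.le (abs_nonneg _)
        _ = |(x ^ 3 + a * x ^ 2 + b * x) - (x' ^ 3 + a * x' ^ 2 + b * x')| := by
            rw [← abs_mul]; congr 1; ring
        _ ≤ _ := by rw [abs_le]; constructor <;> linarith
    · obtain ⟨δ, hδ, hall⟩ := Metric.eventually_nhds_iff.mp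
        ((continuousAt_const (y := (X ^ 3 + a * X ^ 2 + b * X) / 2)).eventually_lt hc
          (by linarith))
      refine ⟨_, half_pos h, min δ 1, by positivity, fun x x' hx hx' h0 h0' => ?_⟩
      have h1 := hall (lt_of_lt_of_le hx (min_le_left _ _))
      have h2 := hall (lt_of_lt_of_le hx' (min_le_left _ _))
      have h3 : |x - x'| ≤ 2 := by
        have a1 := abs_lt.mp (lt_of_lt_of_le hx (min_le_right _ _))
        have a2 := abs_lt.mp (lt_of_lt_of_le hx' (min_le_right _ _))
        rw [abs_le]; constructor <;> linarith
      nlinarith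
  obtain ⟨M, hM⟩ : ∃ M, M = |N + a + 2 * X| + 2 := ⟨_, rfl⟩
  have hM0 : 0 < M := by rw [hM]; positivity
  refine ⟨min δ (min 1 (κ / (2 * M))), by positivity, fun x x' hx hx' hne h0 h0' => ?_⟩
  have hp : 0 < |x - x'| := abs_pos.mpr (sub_ne_zero.mpr hne)
  have hH := H x x' (hx.trans_le (min_le_left _ _)) (hx'.trans_le (min_le_left _ _)) h0 h0'
  have a1 := abs_lt.mp (hx.trans_le ((min_le_right _ _).trans (min_le_left _ _)))
  have a2 := abs_lt.mp (hx'.trans_le ((min_le_right _ _).trans (min_le_left _ _)))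
  have b1 := abs_lt.mp (hx.trans_le ((min_le_right _ _).trans (min_le_right _ _)))
  have b2 := abs_lt.mp (hx'.trans_le ((min_le_right _ _).trans (min_le_right _ _)))
  have hsmall : |x - x'| ≤ κ / M := by
    have : κ / M = 2 * (κ / (2 * M)) := by field_simp
    rw [this, abs_le]; constructor <;> linarith
  have : M ≤ ((x ^ 3 + a * x ^ 2 + b * x) + (x' ^ 3 + a * x' ^ 2 + b * x')) / (x - x') ^ 2 := by
    rw [← sq_abs (x - x'), le_div_iff₀ (by positivity)]
    rw [le_div_iff₀ hM0] at hsmall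
    nlinarith
  have := le_abs_self (N + a + 2 * X)
  linarith

/-- On a nonsingular curve with infinitely many rational points the abscissas are unbounded above:
they are bounded below, so otherwise they accumulate, and steep chords through nearby points lead
to large abscissas. -/
lemma unbounded {a b : ℚ} (hb : b ≠ 0) (hab : a ^ 2 - 4 * b ≠ 0)
    (hinf : {x : ℚ | ∃ y, y ^ 2 = x ^ 3 + a * x ^ 2 + b * x}.Infinite) (N : ℚ) :
    ∃ x y : ℚ, y ^ 2 = x ^ 3 + a * x ^ 2 + b * x ∧ N < x := by
  by_contra! hbd
  have hlow : ∀ x y : ℚ, y ^ 2 = x ^ 3 + a * x ^ 2 + b * x → -(1 + |a| + |b|) ≤ x := by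
    intro x y h
    by_contra! hx
    have ha := abs_nonneg a
    have hb := abs_nonneg b
    have ha' := le_abs_self a
    have hb' := neg_abs_le b
    have : 0 < x ^ 2 + a * x + b := by nlinarith
    nlinarith [sq_nonneg y]
  let S : Set ℝ := (fun x : ℚ => (x : ℝ)) '' {x : ℚ | ∃ y, y ^ 2 = x ^ 3 + a * x ^ 2 + b * x}
  have hS : S.Infinite := hinf.image (Rat.cast_injective.injOn)
  have hSK : S ⊆ Set.Icc ((-(1 + |a| + |b|) : ℚ) : ℝ) (N : ℝ) := by
    rintro _ ⟨x, ⟨y, hy⟩, rfl⟩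
    exact ⟨Rat.cast_le.mpr (hlow x y hy), Rat.cast_le.mpr (hbd x y hy)⟩
  obtain ⟨X, -, hX⟩ := hS.exists_accPt_of_subset_isCompact isCompact_Icc hSK
  have hsimple : X ^ 3 + (a : ℝ) * X ^ 2 + b * X = 0 → 3 * X ^ 2 + 2 * (a : ℝ) * X + b ≠ 0 := by
    intro h0 h1
    have hb' : (b : ℝ) ≠ 0 := by exact_mod_cast hb
    have hab' : (a : ℝ) ^ 2 - 4 * b ≠ 0 := by exact_mod_cast hab
    have hX0 : X ≠ 0 := by rintro rfl; simp at h1; exact hb (by exact_mod_cast h1)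
    have h2 : X ^ 2 + a * X + b = 0 := by
      apply (mul_eq_zero.mp (_ : X * _ = 0)).resolve_left hX0
      linear_combination h0
    have h3 : 2 * X + a = 0 := by
      apply (mul_eq_zero.mp (_ : X * _ = 0)).resolve_left hX0
      linear_combination h1 - h2
    apply hab'
    have : (a : ℝ) = -2 * X := by linarith
    rw [this] at h2 ⊢
    linear_combination -4 * h2
  obtain ⟨δ, hδ, H⟩ := accum hsimple N
  have hfr := accPt_iff_frequently.mp hX
  obtain ⟨_, ⟨hxX, x, ⟨y, hy⟩, rfl⟩, hx⟩ :=
    (hfr.and_eventually (Metric.ball_mem_nhds X hδ)).exists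
  have hxd : 0 < dist (x : ℝ) X := dist_pos.mpr hxX
  obtain ⟨_, ⟨-, x', ⟨y', hy'⟩, rfl⟩, hx'⟩ :=
    (hfr.and_eventually (Metric.ball_mem_nhds X (lt_min hδ hxd))).exists
  have hne : x' ≠ x := by
    rintro rfl
    exact absurd (hx'.trans_le (min_le_right _ _)) (lt_irrefl _)
  have hH := H x x' hx (hx'.trans_le (min_le_left _ _)) (by exact_mod_cast hne.symm)
    (by have := sq_nonneg y; rw [hy] at this; exact_mod_cast this)
    (by have := sq_nonneg y'; rw [hy'] at this; exact_mod_cast this)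
  have hH' : N < ((x ^ 3 + a * x ^ 2 + b * x) + (x' ^ 3 + a * x' ^ 2 + b * x')) / (x - x') ^ 2
        - a - x - x' := by exact_mod_cast hH
  -- signs are chosen so that the chord is as steep as possible
  have hc := chord (l := (|y'| - -|y|) / (x' - x)) (y₁ := -|y|) (y₂ := |y'|)
    (by rw [neg_sq, sq_abs, hy]) (by rw [sq_abs, hy']) hne rfl
  refine absurd (hbd _ _ hc) (not_le.mpr (hH'.trans_le ?_))
  have : ((x ^ 3 + a * x ^ 2 + b * x) + (x' ^ 3 + a * x' ^ 2 + b * x')) / (x - x') ^ 2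
      ≤ ((|y'| - -|y|) / (x' - x)) ^ 2 := by
    rw [div_pow, ← hy, ← hy', show (x - x') ^ 2 = (x' - x) ^ 2 by ring]
    apply div_le_div_of_nonneg_right _ (sq_nonneg _)
    rw [← sq_abs y, ← sq_abs y']
    nlinarith [abs_nonneg y, abs_nonneg y', mul_nonneg (abs_nonneg y) (abs_nonneg y')]
  linarith

/-- If there are infinitely many rational points, each rational point of the upper half plane is a
limit of rational points approaching from the left: add to it points close to infinity. -/
lemma approx {a b X₁ Y₁ : ℚ} (hb : b ≠ 0) (hab : a ^ 2 - 4 * b ≠ 0)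
    (hinf : {x : ℚ | ∃ y, y ^ 2 = x ^ 3 + a * x ^ 2 + b * x}.Infinite)
    (h₁ : Y₁ ^ 2 = X₁ ^ 3 + a * X₁ ^ 2 + b * X₁) (hY : 0 < Y₁) {ε : ℝ} (hε : 0 < ε) :
    ∃ X Y : ℚ, Y ^ 2 = X ^ 3 + a * X ^ 2 + b * X ∧ X < X₁ ∧ |(X : ℝ) - X₁| < ε ∧
      |(Y : ℝ) - Y₁| < ε := by
  obtain ⟨N, hN⟩ := near_infinity (a := a) (b := b) (x₁ := X₁) (y₁ := Y₁) (ε := ε)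
    (by exact_mod_cast hY) hε
  obtain ⟨N', hN'⟩ := exists_rat_gt N
  obtain ⟨G, Y, hG, hNG⟩ := unbounded hb hab hinf (max N' (max X₁ (1 + |a| + |b|)))
  have g1 : N' < G := (le_max_left _ _).trans_lt hNG
  have g2 : X₁ < G := ((le_max_left _ _).trans (le_max_right _ _)).trans_lt hNG
  have g3 : 1 + |a| + |b| < G := ((le_max_right _ _).trans (le_max_right _ _)).trans_lt hNG
  have hY0 : Y ≠ 0 := by
    rintro rfl
    have ha := abs_nonneg a
    have hb := abs_nonneg b
    have ha' := neg_abs_le a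
    have hb' := neg_abs_le b
    have : 0 < G ^ 2 + a * G + b := by nlinarith
    nlinarith
  have hG' : |Y| ^ 2 = G ^ 3 + a * G ^ 2 + b * G := by rw [sq_abs, hG]
  obtain ⟨l, hl⟩ : ∃ l, l = (|Y| - Y₁) / (G - X₁) := ⟨_, rfl⟩
  have hc := chord h₁ hG' g2.ne' hl
  obtain ⟨k1, k2, k3⟩ := hN G (|Y| : ℚ) l (hN'.trans (by exact_mod_cast g1))
    (by exact_mod_cast abs_pos.mpr hY0) (by exact_mod_cast hG') (by exact_mod_cast h₁)
    (by rw [hl]; push_cast; rfl)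
  refine ⟨_, _, hc, by exact_mod_cast k2, ?_, by push_cast; exact k3⟩
  push_cast
  rw [abs_lt]; constructor <;> linarith

/-! ### The curve of rational medians -/

section
variable {p : ℕ} [hp : Fact p.Prime]

/-- A point whose abscissa is not `p`-integral reduces to the point at infinity, for a model with
`p`-integral coefficients. -/
lemma formal_of_large {a b X Y : ℚ} (ha : padicNorm p a ≤ 1) (hb : padicNorm p b ≤ 1)
    (h : Y ^ 2 = X ^ 3 + a * X ^ 2 + b * X) (hX : 1 < padicNorm p X) :
    Formal p a b (X / Y) (1 / Y) ∧ X / Y ≠ 0 := by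
  have hX0 : X ≠ 0 := by rintro rfl; simp at hX; linarith
  have hXi : padicNorm p (1 / X) < 1 := by
    rw [padicNorm.div, padicNorm.one, div_lt_one (by linarith)]; exact hX
  have hm : padicNorm p (a * (1 / X) + b * ((1 / X) * (1 / X))) < 1 := by
    have h0 := padicNorm.nonneg (p := p) (1 / X)
    refine lt_of_le_of_lt (N_add_le (c := padicNorm p (1 / X)) ?_ ?_) hXi
    · exact (N_mul_le ha le_rfl).trans (by linarith)
    · exact (N_mul_le hb (N_mul_le hXi.le le_rfl)).trans (by linarith)
  have hY2 : padicNorm p Y ^ 2 = padicNorm p X ^ 3 := by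
    have : Y ^ 2 = X ^ 3 * (1 + (a * (1 / X) + b * ((1 / X) * (1 / X)))) := by
      rw [h]; field_simp; ring
    rw [← N_pow, this, padicNorm.mul, N_one_add hm, N_pow, mul_one]
  have hYn : 0 ≤ padicNorm p Y := padicNorm.nonneg _
  have hXY : padicNorm p X < padicNorm p Y := by
    by_contra! hc
    have : padicNorm p Y ^ 2 ≤ padicNorm p X ^ 2 := pow_le_pow_left₀ hYn hc 2
    have : padicNorm p X ^ 2 < padicNorm p X ^ 3 := pow_lt_pow_right₀ hX (by norm_num)
    linarith
  have hY0 : Y ≠ 0 := by rintro rfl; simp at hXY; linarith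
  refine ⟨⟨?_, ?_, ?_⟩, div_ne_zero hX0 hY0⟩
  · field_simp
    linear_combination h
  · rw [padicNorm.div, div_lt_one (by linarith)]; exact hXY
  · rw [padicNorm.div, padicNorm.one, div_lt_one (by linarith)]; linarith

/-- The degenerate triangle `v = u² w`, where `y = u w`, provides a rational point
on `Y² = X³ + (K² / 4 - 1 - U²) X² + U² X`, where `U = u + 1 / u` and `K = w + 1 / w`. -/
lemma point_on_curve {u w : ℚ} (hu : u ≠ 0) (hw : w ≠ 0) :
    (w * (u ^ 2 + 1) * (u ^ 4 * w ^ 2 - u ^ 2 - 1)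
        + (w + 1 / w) / 2 * ((u ^ 2 + 1) * u ^ 2 * w ^ 2)) ^ 2
      = ((u ^ 2 + 1) * u ^ 2 * w ^ 2) ^ 3
        + (((w + 1 / w) / 2) ^ 2 - 1 - (u + 1 / u) ^ 2) * ((u ^ 2 + 1) * u ^ 2 * w ^ 2) ^ 2
        + (u + 1 / u) ^ 2 * ((u ^ 2 + 1) * u ^ 2 * w ^ 2) := by
  field_simp
  ring

/-- Passage to the model scaled by `(X, Y) ↦ (r² X, r³ Y)`. -/
lemma scale {r a b X Y : ℚ} (h : Y ^ 2 = X ^ 3 + a * X ^ 2 + b * X) :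
    (r ^ 3 * Y) ^ 2 = (r ^ 2 * X) ^ 3 + (r ^ 2 * a) * (r ^ 2 * X) ^ 2
      + (r ^ 4 * b) * (r ^ 2 * X) := by
  linear_combination r ^ 6 * h

/-- If `u` is not `p`-integral and `|w| ≥ 1`, the point of `point_on_curve` lies in the kernel of
reduction of a suitably scaled `p`-integral model, even when `p = 2`. -/
lemma infinite_of_padic {u w : ℚ} (hu : 0 < u) (hw : 0 < w) (hup : 1 < padicNorm p u)
    (hwp : 1 ≤ padicNorm p w) : ∃ r : ℚ, 0 < r ∧
      {x : ℚ | ∃ y, y ^ 2 = x ^ 3 + (r ^ 2 * (((w + 1 / w) / 2) ^ 2 - 1 - (u + 1 / u) ^ 2)) * x ^ 2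
        + (r ^ 4 * (u + 1 / u) ^ 2) * x}.Infinite := by
  have hNu : padicNorm p (1 / u) < 1 := by
    rw [padicNorm.div, padicNorm.one, div_lt_one (by linarith)]; exact hup
  have hpu : (p : ℚ) ≤ padicNorm p u := by
    have := N_le_inv hNu
    rw [padicNorm.div, padicNorm.one, one_div] at this
    exact (inv_le_inv₀ (by linarith) (by exact_mod_cast hp.out.pos)).mp this
  have hU : padicNorm p (u + 1 / u) = padicNorm p u := by
    rw [padicNorm.add_eq_max_of_ne (by linarith), max_eq_left (by linarith)]
  have hu2 : padicNorm p (u ^ 2 + 1) = padicNorm p u ^ 2 := by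
    have : u ^ 2 + 1 = u * (u + 1 / u) := by field_simp
    rw [this, padicNorm.mul, hU, sq]
  have hK : padicNorm p (w + 1 / w) ≤ padicNorm p w := by
    refine N_add_le le_rfl ?_
    rw [padicNorm.div, padicNorm.one]
    exact (div_le_one (by linarith)).mpr hwp |>.trans hwp
  -- halving costs at most a factor `p`, and only for `p = 2`
  have h2 : 1 ≤ (p : ℚ) * padicNorm p 2 := by
    have h1p : (1 : ℚ) ≤ p := by exact_mod_cast hp.out.one_lt.le
    by_cases h : p = 2
    · subst h
      have := padicNorm.padicNorm_p (p := 2) (by norm_num)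
      push_cast at this ⊢
      rw [this]; norm_num
    · have : padicNorm p ((2 : ℕ) : ℚ) = 1 := by
        rw [padicNorm.nat_eq_one_iff]
        intro hd
        exact h ((Nat.prime_dvd_prime_iff_eq hp.out Nat.prime_two).mp hd)
      push_cast at this
      rw [this]; linarith
  have h20 : 0 < padicNorm p 2 := (padicNorm.nonneg _).lt_of_ne' (padicNorm.nonzero two_ne_zero)
  -- `hK2` and `hU2` are strict bounds by the square root of the absolute value of the abscissa
  -- of the given point, so that the scaling below can keep that abscissa non-integral
  have hK2 : padicNorm p ((w + 1 / w) / 2) < padicNorm p u ^ 2 * padicNorm p w := by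
    rw [padicNorm.div, div_lt_iff₀ h20]
    calc _ ≤ padicNorm p w := hK
      _ ≤ padicNorm p w * (p * padicNorm p 2) := le_mul_of_one_le_right (by linarith) h2
      _ = p * (padicNorm p w * padicNorm p 2) := by ring
      _ ≤ padicNorm p u * (padicNorm p w * padicNorm p 2) := by gcongr
      _ < padicNorm p u ^ 2 * (padicNorm p w * padicNorm p 2) := by
          apply mul_lt_mul_of_pos_right _ (by positivity)
          exact lt_self_pow₀ hup (by norm_num)
      _ = _ := by ring
  have hU2 : padicNorm p u < padicNorm p u ^ 2 * padicNorm p w :=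
    (lt_self_pow₀ hup (by norm_num)).trans_le (le_mul_of_one_le_right (by positivity) hwp)
  -- `r` clears the denominators of the model and no more
  obtain ⟨r, hr0, hr1, hrU, hrK, hrX⟩ : ∃ r : ℚ, 0 < r ∧ padicNorm p r ≤ 1 ∧
      padicNorm p (r * (u + 1 / u)) ≤ 1 ∧ padicNorm p (r * ((w + 1 / w) / 2)) ≤ 1 ∧
      1 < padicNorm p r * (padicNorm p u ^ 2 * padicNorm p w) := by
    rcases le_total (padicNorm p ((w + 1 / w) / 2)) (padicNorm p u) with h | h
    · have hru : padicNorm p (1 / u) = 1 / padicNorm p u := by rw [padicNorm.div, padicNorm.one]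
      have hpos : 0 < padicNorm p u := by linarith
      refine ⟨1 / u, by positivity, hNu.le, ?_, ?_, ?_⟩
      · rw [padicNorm.mul, hru, hU]; field_simp; rfl
      · rw [padicNorm.mul, hru, one_div, inv_mul_le_one₀ hpos]; exact h
      · rw [hru, one_div, ← div_eq_inv_mul, one_lt_div hpos]; exact hU2
    · have hpos : 0 < padicNorm p ((w + 1 / w) / 2) := by linarith
      have hru : padicNorm p (1 / ((w + 1 / w) / 2)) = 1 / padicNorm p ((w + 1 / w) / 2) := by
        rw [padicNorm.div, padicNorm.one]
      refine ⟨1 / ((w + 1 / w) / 2), by positivity, ?_, ?_, ?_, ?_⟩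
      · rw [hru, one_div]; exact inv_le_one_of_one_le₀ (by linarith)
      · rw [padicNorm.mul, hru, hU, one_div, inv_mul_le_one₀ hpos]; exact h
      · rw [padicNorm.mul, hru, one_div, inv_mul_le_one₀ hpos]
      · rw [hru, one_div, ← div_eq_inv_mul, one_lt_div hpos]; exact hK2
  refine ⟨r, hr0, ?_⟩
  have sq1 : ∀ {x : ℚ}, padicNorm p x ≤ 1 → padicNorm p (x ^ 2) ≤ 1 := fun h => by
    rw [N_pow]; exact pow_le_one₀ (padicNorm.nonneg _) h
  have ha : padicNorm p (r ^ 2 * (((w + 1 / w) / 2) ^ 2 - 1 - (u + 1 / u) ^ 2)) ≤ 1 := by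
    have : r ^ 2 * (((w + 1 / w) / 2) ^ 2 - 1 - (u + 1 / u) ^ 2)
      = (r * ((w + 1 / w) / 2)) ^ 2 - r ^ 2 - (r * (u + 1 / u)) ^ 2 := by ring
    rw [this]
    exact N_sub_le (N_sub_le (sq1 hrK) (sq1 hr1)) (sq1 hrU)
  have hb : padicNorm p (r ^ 4 * (u + 1 / u) ^ 2) ≤ 1 := by
    have : r ^ 4 * (u + 1 / u) ^ 2 = r ^ 2 * (r * (u + 1 / u)) ^ 2 := by ring
    rw [this]
    exact (N_mul_le (sq1 hr1) (sq1 hrU)).trans (by norm_num)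
  have hX : 1 < padicNorm p (r ^ 2 * ((u ^ 2 + 1) * u ^ 2 * w ^ 2)) := by
    have : padicNorm p (r ^ 2 * ((u ^ 2 + 1) * u ^ 2 * w ^ 2))
        = (padicNorm p r * (padicNorm p u ^ 2 * padicNorm p w)) ^ 2 := by
      rw [padicNorm.mul, padicNorm.mul, padicNorm.mul, hu2, N_pow, N_pow, N_pow]; ring
    rw [this]
    exact one_lt_pow₀ hrX two_ne_zero
  obtain ⟨hF, hF0⟩ := formal_of_large ha hb (scale (point_on_curve hu.ne' hw.ne')) hX
  exact formal_small ha hb hF hF0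
end

/-- Any prime dividing the numerator of `u` may serve as `p`: the curve depends only on `u + 1 / u` and
`w + 1 / w`, so `u` and, if necessary, `w` may be replaced by their inverses. -/
lemma infinite_points {u w : ℚ} (hu : 1 < u) (hw : 1 < w) : ∃ r : ℚ, 0 < r ∧
      {x : ℚ | ∃ y, y ^ 2 = x ^ 3 + (r ^ 2 * (((w + 1 / w) / 2) ^ 2 - 1 - (u + 1 / u) ^ 2)) * x ^ 2
        + (r ^ 4 * (u + 1 / u) ^ 2) * x}.Infinite := by
  have hu0 : 0 < u := by linarith
  have hw0 : 0 < w := by linarith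
  have hnum : u.num.natAbs ≠ 1 := by
    intro h
    have h1 : u.num = 1 := by
      have := Rat.num_pos.mpr hu0
      omega
    have h2 : (1 : ℚ) ≤ u.den := by exact_mod_cast u.den_pos
    have h3 := Rat.num_div_den u
    rw [h1] at h3
    have : u ≤ 1 := by
      rw [← h3]; push_cast
      exact (div_le_one (by linarith)).mpr h2
    linarith
  obtain ⟨p, hpp, hpd⟩ := Nat.exists_prime_and_dvd hnum
  have : Fact p.Prime := ⟨hpp⟩
  have hup : padicNorm p u < 1 := by
    rw [← Rat.num_div_den u, padicNorm.div]
    have h1 : padicNorm p (u.den : ℚ) = 1 := by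
      rw [padicNorm.nat_eq_one_iff]
      intro hd
      exact hpp.one_lt.ne' (Nat.dvd_one.mp (u.reduced ▸ Nat.dvd_gcd hpd hd))
    rw [h1, div_one, padicNorm.int_lt_one_iff]
    exact Int.natCast_dvd.mpr hpd
  have hup0 : 0 < padicNorm p u := (padicNorm.nonneg _).lt_of_ne' (padicNorm.nonzero hu0.ne')
  have hup' : 1 < padicNorm p (1 / u) := by
    rw [padicNorm.div, padicNorm.one]; exact (one_lt_div hup0).mpr hup
  have e1 : 1 / u + 1 / (1 / u) = u + 1 / u := by rw [one_div_one_div]; ring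
  rcases le_or_gt 1 (padicNorm p w) with h | h
  · have := infinite_of_padic (u := 1 / u) (by positivity) hw0 hup' h
    rwa [e1] at this
  · have hwp0 : 0 < padicNorm p w := (padicNorm.nonneg _).lt_of_ne' (padicNorm.nonzero hw0.ne')
    have e2 : 1 / w + 1 / (1 / w) = w + 1 / w := by rw [one_div_one_div]; ring
    have := infinite_of_padic (p := p) (u := 1 / u) (w := 1 / w) (by positivity) (by positivity)
      hup' (by rw [padicNorm.div, padicNorm.one]; exact ((one_lt_div hwp0).mpr h).le)
    rwa [e1, e2] at this

/-- The birational map from the cubic to the biquadratic curve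
`U (y + 1 / y) = x + 1 / x + K`, with inverse `ξ = U x y`, `η = x (ξ - U²)`; here `η = Y - K ξ / 2`
in terms of the ordinate `Y` of the Weierstrass model. -/
lemma to_biquadratic {K U ξ η x y : ℚ} (h : η ^ 2 + K * ξ * η = ξ * (ξ - 1) * (ξ - U ^ 2))
    (hξ : ξ - U ^ 2 ≠ 0) (hU : U ≠ 0) (hx0 : x ≠ 0) (hx : x = η / (ξ - U ^ 2))
    (hy : y = ξ / (U * x)) : U * x * (y ^ 2 + 1) = y * (x ^ 2 + K * x + 1) := by
  have hη : η = x * (ξ - U ^ 2) := by rw [hx]; field_simp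
  have hξy : ξ = U * x * y := by rw [hy]; field_simp
  have h1 : x ^ 2 * (ξ - U ^ 2) + K * ξ * x - ξ * (ξ - 1) = 0 := by
    apply (mul_eq_zero.mp (_ : (ξ - U ^ 2) * _ = 0)).resolve_left hξ
    rw [hη] at h
    linear_combination h
  have h2 : (U * x) * (y * (x ^ 2 + K * x + 1) - U * x * (y ^ 2 + 1)) = 0 := by
    rw [hξy] at h1
    linear_combination h1
  have := (mul_eq_zero.mp h2).resolve_left (mul_ne_zero hU hx0)
  linarith

lemma add_inv_mono {x y : ℚ} (hx : 1 < x) (hxy : x ≤ y) : x + 1 / x ≤ y + 1 / y := by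
  have hx0 : 0 < x := by linarith
  have hy0 : 0 < y := by linarith
  have : y + 1 / y - (x + 1 / x) = (y - x) * (x * y - 1) / (x * y) := by
    field_simp
    ring
  have : 0 ≤ (y - x) * (x * y - 1) / (x * y) :=
    div_nonneg (mul_nonneg (by linarith) (by nlinarith)) (by nlinarith)
  linarith

lemma add_inv_strict {x y : ℚ} (hx : 1 < x) (hxy : x < y) : x + 1 / x < y + 1 / y := by
  have hx0 : 0 < x := by linarith
  have hy0 : 0 < y := by linarith
  have : y + 1 / y - (x + 1 / x) = (y - x) * (x * y - 1) / (x * y) := by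
    field_simp
    ring
  have : 0 < (y - x) * (x * y - 1) / (x * y) :=
    div_pos (mul_pos (by linarith) (by nlinarith)) (by nlinarith)
  linarith

/-- Admissible `v` occur arbitrarily close below `u² w`. The conditions `hs₁`, `hs₂` say that the
cubic is nonsingular, and `hd` that the degenerate triangle does not lie over the pole `ξ = U²` of
the coordinate `x`. -/
lemma exists_close {u w m : ℚ} (hu : 1 < u) (hw : 1 < w)
    (hs₁ : ((w + 1 / w) / 2) ^ 2 - (u + 1 / u + 1) ^ 2 ≠ 0)
    (hs₂ : ((w + 1 / w) / 2) ^ 2 - (u + 1 / u - 1) ^ 2 ≠ 0)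
    (hd : u ^ 4 * w ^ 2 - u ^ 2 - 1 ≠ 0) (hm : m < u ^ 2 * w) :
    ∃ v t : ℚ, m < v ∧ v < u ^ 2 * w ∧ t ^ 2 = (v ^ 2 * w + w + v * w ^ 2 + v) ^ 2 * u ^ 2
            - 4 * v ^ 2 * w ^ 2 * (u ^ 2 + 1) ^ 2 := by
  have hu0 : 0 < u := by linarith
  have hw0 : 0 < w := by linarith
  obtain ⟨r, hr, hinf⟩ := infinite_points hu hw
  have hP := point_on_curve hu0.ne' hw0.ne'
  obtain ⟨K, hK⟩ : ∃ K, K = w + 1 / w := ⟨_, rfl⟩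
  obtain ⟨U, hU⟩ : ∃ U, U = u + 1 / u := ⟨_, rfl⟩
  obtain ⟨ξ₁, hξ₁⟩ : ∃ ξ₁, ξ₁ = (u ^ 2 + 1) * u ^ 2 * w ^ 2 := ⟨_, rfl⟩
  obtain ⟨Y₁, hY₁⟩ : ∃ Y₁, Y₁ = w * (u ^ 2 + 1) * (u ^ 4 * w ^ 2 - u ^ 2 - 1)
        + (w + 1 / w) / 2 * ((u ^ 2 + 1) * u ^ 2 * w ^ 2) := ⟨_, rfl⟩
  rw [← hY₁, ← hK, ← hU, ← hξ₁] at hP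
  rw [← hK, ← hU] at hinf hs₁ hs₂
  have hU0 : 0 < U := by rw [hU]; positivity
  have hYpos : 0 < Y₁ := by
    have e : Y₁ = w * (u ^ 2 + 1) * (u ^ 4 * w ^ 2 - u ^ 2 - 1 + (w ^ 2 + 1) / 2 * u ^ 2) := by
      rw [hY₁]; field_simp
    have h1 : 1 < w ^ 2 := one_lt_pow₀ hw two_ne_zero
    have h2 : 1 < u ^ 4 := one_lt_pow₀ hu (by norm_num)
    have h3 : 0 < u ^ 2 := by positivity
    rw [e]
    apply mul_pos (by positivity)
    nlinarith
  have hξU : ξ₁ - U ^ 2 = (u ^ 2 + 1) * (u ^ 4 * w ^ 2 - u ^ 2 - 1) / u ^ 2 := by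
    rw [hξ₁, hU]; field_simp; ring
  have hξU0 : ξ₁ - U ^ 2 ≠ 0 := by
    rw [hξU]; exact div_ne_zero (mul_ne_zero (by positivity) hd) (by positivity)
  have hb : r ^ 4 * U ^ 2 ≠ 0 := by positivity
  have hab : (r ^ 2 * ((K / 2) ^ 2 - 1 - U ^ 2)) ^ 2 - 4 * (r ^ 4 * U ^ 2) ≠ 0 := by
    have : (r ^ 2 * ((K / 2) ^ 2 - 1 - U ^ 2)) ^ 2 - 4 * (r ^ 4 * U ^ 2)
        = r ^ 4 * (((K / 2) ^ 2 - (U + 1) ^ 2) * ((K / 2) ^ 2 - (U - 1) ^ 2)) := by ring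
    rw [this]
    exact mul_ne_zero (by positivity) (mul_ne_zero hs₁ hs₂)
  -- the coordinates `x = v` and `y` on the biquadratic curve, as functions on the scaled
  -- Weierstrass model
  let xf : ℝ × ℝ → ℝ := fun P => (P.2 / r ^ 3 - K / 2 * (P.1 / r ^ 2)) / (P.1 / r ^ 2 - U ^ 2)
  let yf : ℝ × ℝ → ℝ := fun P => P.1 / r ^ 2 / (U * xf P)
  let P₁ : ℝ × ℝ := ((r ^ 2 * ξ₁ : ℚ), (r ^ 3 * Y₁ : ℚ))
  have hrR : (r : ℝ) ≠ 0 := by exact_mod_cast hr.ne'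
  have hP1 : P₁.1 / (r : ℝ) ^ 2 = ξ₁ := by simp only [P₁]; push_cast; field_simp
  have hP2 : P₁.2 / (r : ℝ) ^ 3 = Y₁ := by simp only [P₁]; push_cast; field_simp
  have hx₁ : xf P₁ = (u ^ 2 * w : ℚ) := by
    simp only [xf]
    rw [hP1, hP2]
    have : (Y₁ - K / 2 * ξ₁) / (ξ₁ - U ^ 2) = u ^ 2 * w := by
      rw [div_eq_iff hξU0, hξU, hY₁, ← hK, ← hξ₁]; field_simp; ring
    exact_mod_cast this
  have hy₁ : yf P₁ = (u * w : ℚ) := by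
    simp only [yf]
    rw [hx₁, hP1]
    have : ξ₁ / (U * (u ^ 2 * w)) = u * w := by
      rw [hξ₁, hU]; field_simp
    exact_mod_cast this
  have hcx : ContinuousAt xf P₁ := by
    apply ContinuousAt.div (by fun_prop) (by fun_prop)
    rw [hP1]; exact_mod_cast hξU0
  have hcy : ContinuousAt yf P₁ := by
    apply ContinuousAt.div (by fun_prop) (by fun_prop)
    rw [hx₁]
    have : U * (u ^ 2 * w) ≠ 0 := by positivity
    exact_mod_cast this
  have hcd : ContinuousAt (fun P : ℝ × ℝ => P.1 / (r : ℝ) ^ 2 - (U : ℝ) ^ 2) P₁ := by fun_prop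
  have hx1 : 1 < u ^ 2 * w := one_lt_mul_of_lt_of_le (one_lt_pow₀ hu two_ne_zero) hw.le
  have hy1 : 1 < u * w := one_lt_mul_of_lt_of_le hu hw.le
  have ev1 : ∀ᶠ P in 𝓝 P₁, ((max m 1 : ℚ) : ℝ) < xf P :=
    continuousAt_const.eventually_lt hcx (by rw [hx₁]; exact_mod_cast max_lt hm hx1)
  have ev2 : ∀ᶠ P in 𝓝 P₁, ((1 : ℚ) : ℝ) < yf P :=
    continuousAt_const.eventually_lt hcy (by rw [hy₁]; exact_mod_cast hy1)
  have ev3 : ∀ᶠ P : ℝ × ℝ in 𝓝 P₁, P.1 / (r : ℝ) ^ 2 - (U : ℝ) ^ 2 ≠ 0 :=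
    hcd.eventually_ne (by rw [hP1]; exact_mod_cast hξU0)
  obtain ⟨ε, hε, hall⟩ := Metric.eventually_nhds_iff.mp (ev1.and (ev2.and ev3))
  obtain ⟨X, Y, hXY, hX, hXε, hYε⟩ := approx hb hab hinf (scale (r := r) hP)
    (by positivity) hε
  obtain ⟨k1, k2, k3⟩ := hall (y := ((X : ℝ), (Y : ℝ))) (by
    rw [Prod.dist_eq]; exact max_lt hXε hYε)
  obtain ⟨ξ, hξ⟩ : ∃ ξ, ξ = X / r ^ 2 := ⟨_, rfl⟩
  obtain ⟨η, hη⟩ : ∃ η, η = Y / r ^ 3 - K / 2 * (X / r ^ 2) := ⟨_, rfl⟩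
  obtain ⟨x, hx⟩ : ∃ x, x = η / (ξ - U ^ 2) := ⟨_, rfl⟩
  obtain ⟨y, hy⟩ : ∃ y, y = ξ / (U * x) := ⟨_, rfl⟩
  have hxR : xf (X, Y) = x := by rw [hx, hη, hξ]; push_cast; rfl
  have hyR : yf (X, Y) = y := by rw [hy, hξ]; push_cast; rw [← hxR]
  have k3' : (X : ℝ) / (r : ℝ) ^ 2 - (U : ℝ) ^ 2 ≠ 0 := k3
  have hξ0 : ξ - U ^ 2 ≠ 0 := by rw [hξ]; exact_mod_cast k3'
  have hξlt : ξ < ξ₁ := by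
    rw [hξ, div_lt_iff₀ (by positivity)]; linarith
  rw [hxR] at k1
  rw [hyR] at k2
  have k1' : max m 1 < x := by exact_mod_cast k1
  have hxm : m < x := (le_max_left _ _).trans_lt k1'
  have hx1' : 1 < x := (le_max_right _ _).trans_lt k1'
  have hy1' : 1 < y := by exact_mod_cast k2
  have hx0 : 0 < x := by linarith
  have hy0 : 0 < y := by linarith
  have hW : η ^ 2 + K * ξ * η = ξ * (ξ - 1) * (ξ - U ^ 2) := by
    have hYη : Y = r ^ 3 * (η + K / 2 * ξ) := by rw [hη, hξ]; field_simp; ring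
    have hXξ : X = r ^ 2 * ξ := by rw [hξ]; field_simp
    rw [hYη, hXξ] at hXY
    have h6 : r ^ 6 ≠ 0 := by positivity
    apply mul_left_cancel₀ h6
    linear_combination hXY
  have hbi := to_biquadratic hW hξ0 hU0.ne' hx0.ne' hx hy
  have hbi' : U * (y + 1 / y) = x + 1 / x + K := by
    field_simp
    linear_combination hbi
  have hbi₁ : U * (u * w + 1 / (u * w)) = u ^ 2 * w + 1 / (u ^ 2 * w) + K := by
    rw [hU, hK]; field_simp; ring
  refine ⟨x, x * w * (u ^ 2 + 1) * (y - 1 / y), hxm, ?_, ?_⟩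
  -- a nearby point with `ξ = U x y` smaller than `ξ₁` must have smaller `x`, because on the
  -- curve `x` and `y` increase together where both exceed `1`
  · by_contra! hle
    have h1 := add_inv_mono hx1 hle
    have h2 : u * w ≤ y := by
      by_contra! hlt
      have := mul_lt_mul_of_pos_left (add_inv_strict hy1' hlt) hU0
      linarith
    have h3 : ξ = U * (x * y) := by rw [hy]; field_simp
    have h4 : ξ₁ = U * ((u ^ 2 * w) * (u * w)) := by rw [hξ₁, hU]; field_simp
    have : (u ^ 2 * w) * (u * w) ≤ x * y := mul_le_mul hle h2 (by positivity) hx0.le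
    have := mul_le_mul_of_nonneg_left this hU0.le
    linarith
  · have h1 : x ^ 2 * w + w + x * w ^ 2 + x = x * w * (U * (y + 1 / y)) := by
      rw [hbi', hK]; field_simp; ring
    rw [h1, hU]
    field_simp
    ring

/-- there is a nonzero polynomial `f` in `u, w` such that whenever
`u, w > 1` are rationals with `f(u,w) ≠ 0`, there are infinitely many rational
`v` satisfying the triangle inequalities `max(u²/w, w/u²) < v < u²w` for which
the median condition `t² = (v²w + w + vw² + v)²u² − 4v²w²(u²+1)²` has a rational
solution `t`; i.e. infinitely many hyperbolic triangles with rational sides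
`a = 2 log u`, `b = log w` and a rational median intersecting side `a`. -/
theorem infinitely_many_rational_medians :
    ∃ f : MvPolynomial (Fin 2) ℚ, f ≠ 0 ∧
      ∀ u w : ℚ, 1 < u → 1 < w → MvPolynomial.eval ![u, w] f ≠ 0 →
        {v : ℚ | max (u ^ 2 / w) (w / u ^ 2) < v ∧ v < u ^ 2 * w ∧
          ∃ t : ℚ, t ^ 2 = (v ^ 2 * w + w + v * w ^ 2 + v) ^ 2 * u ^ 2
            - 4 * v ^ 2 * w ^ 2 * (u ^ 2 + 1) ^ 2}.Infinite := by
  -- the factors exclude the singular cubics, and the case where the degenerate triangle lies over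
  -- the pole `ξ = U²` of the coordinate `x`
  let u' : MvPolynomial (Fin 2) ℚ := MvPolynomial.X 0
  let w' : MvPolynomial (Fin 2) ℚ := MvPolynomial.X 1
  let f : MvPolynomial (Fin 2) ℚ :=
    (u' ^ 2 * (w' ^ 2 + 1) ^ 2 - 4 * w' ^ 2 * (u' ^ 2 + u' + 1) ^ 2)
      * (u' ^ 2 * (w' ^ 2 + 1) ^ 2 - 4 * w' ^ 2 * (u' ^ 2 - u' + 1) ^ 2)
      * (u' ^ 4 * w' ^ 2 - u' ^ 2 - 1)
  have hf : ∀ u w : ℚ, MvPolynomial.eval ![u, w] f =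
      (u ^ 2 * (w ^ 2 + 1) ^ 2 - 4 * w ^ 2 * (u ^ 2 + u + 1) ^ 2)
      * (u ^ 2 * (w ^ 2 + 1) ^ 2 - 4 * w ^ 2 * (u ^ 2 - u + 1) ^ 2)
      * (u ^ 4 * w ^ 2 - u ^ 2 - 1) := by
    intro u w
    simp [f, u', w']
  refine ⟨f, ?_, ?_⟩
  · intro h0
    have := hf 1 0
    rw [h0] at this
    norm_num at this
  · intro u w hu hw hne
    rw [hf] at hne
    have hu0 : 0 < u := by linarith
    have hw0 : 0 < w := by linarith
    have hd := right_ne_zero_of_mul hne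
    have hs₁ : ((w + 1 / w) / 2) ^ 2 - (u + 1 / u + 1) ^ 2 ≠ 0 := by
      intro h
      apply left_ne_zero_of_mul (left_ne_zero_of_mul hne)
      field_simp at h
      linear_combination h
    have hs₂ : ((w + 1 / w) / 2) ^ 2 - (u + 1 / u - 1) ^ 2 ≠ 0 := by
      intro h
      apply right_ne_zero_of_mul (left_ne_zero_of_mul hne)
      field_simp at h
      linear_combination h
    have hu2 : 1 < u ^ 2 := one_lt_pow₀ hu two_ne_zero
    have hmax : max (u ^ 2 / w) (w / u ^ 2) < u ^ 2 * w := by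
      apply max_lt
      · rw [div_lt_iff₀ hw0]; nlinarith [mul_pos hw0 (sub_pos.mpr hw)]
      · rw [div_lt_iff₀ (by positivity)]
        have : 1 < u ^ 2 * u ^ 2 := by nlinarith
        nlinarith [mul_lt_mul_of_pos_left this hw0]
    -- a finite set would have a largest element, but values even closer to `u² w` exist
    intro hfin
    obtain ⟨v₀, t₀, h₀, h₀', ht₀⟩ := exists_close hu hw hs₁ hs₂ hd hmax
    obtain ⟨v, ⟨hv, hv', -⟩, hvmax⟩ := hfin.exists_maximal ⟨v₀, h₀, h₀', t₀, ht₀⟩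
    obtain ⟨v₂, t₂, h₂, h₂', ht₂⟩ := exists_close hu hw hs₁ hs₂ hd hv'
    exact absurd (hvmax ⟨hv.trans h₂, h₂', t₂, ht₂⟩ h₂.le) (not_le.mpr h₂)
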